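/- Dominance of the right part of a BTP: Let π be an arbitrary binomial transport plan with nodes (x, x⁻, x⁺, y⁻⁻, y⁻⁺, y⁺⁻, y⁺⁺), with right part π_r and left part π_l. Then at least one of the following holds: (i) π_r is a suboptimal martingale transport plan for the cost function c(x,y) := |x+y|, i.e. there exists a finitely supported measure π̃_r on ℝ² having the same first and second marginals as π_r and satisfying the fiberwise barycenter (martingale) condition ∫_{{s}×ℝ} t dπ̃_r(s,t) = s·π̃_r({s}×ℝ) for every s ∈ ℝ, such that ∫ |x+y| dπ_r(x,y) < ∫ |x+y| dπ̃_r(x,y); or (ii) ∫ |x+y| dπ_l(x,y) ≤ ∫ |x+y| dπ_r(x,y). -/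

import Mathlib

open MeasureTheory

noncomputable section

/-- `λ⁺`: the weight of the upper branch of the first step. -/
def lamP (x xm xp : ℝ) : ℝ := if xm < xp then (x - xm) / (xp - xm) else 1

/-- `λ⁻ := 1 - λ⁺`. -/
def lamM (x xm xp : ℝ) : ℝ := 1 - lamP x xm xp

/-- `λ⁻⁺`: the upper weight of the second step out of `x⁻`. -/
def lamMP (xm ymm ymp : ℝ) : ℝ := if ymm < ymp then (xm - ymm) / (ymp - ymm) else 1

/-- `λ⁻⁻ := 1 - λ⁻⁺`. -/
def lamMM (xm ymm ymp : ℝ) : ℝ := 1 - lamMP xm ymm ymp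

/-- `λ⁺⁺`: the upper weight of the second step out of `x⁺`. -/
def lamPP (xp ypm ypp : ℝ) : ℝ := if ypm < ypp then (xp - ypm) / (ypp - ypm) else 1

/-- `λ⁺⁻ := 1 - λ⁺⁺`. -/
def lamPM (xp ypm ypp : ℝ) : ℝ := 1 - lamPP xp ypm ypp

/-- The binomial transport plan (BTP) with nodes `(x, x⁻, x⁺, y⁻⁻, y⁻⁺, y⁺⁻, y⁺⁺)`,
a probability measure on `ℝ³`. -/
def BTP (x xm xp ymm ymp ypm ypp : ℝ) : Measure (ℝ × ℝ × ℝ) :=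
  ENNReal.ofReal (lamM x xm xp * lamMM xm ymm ymp) • Measure.dirac (x, xm, ymm) +
  ENNReal.ofReal (lamM x xm xp * lamMP xm ymm ymp) • Measure.dirac (x, xm, ymp) +
  ENNReal.ofReal (lamP x xm xp * lamPM xp ypm ypp) • Measure.dirac (x, xp, ypm) +
  ENNReal.ofReal (lamP x xm xp * lamPP xp ypm ypp) • Measure.dirac (x, xp, ypp)

/-- The right part `π_r` of the BTP with the given nodes. -/
def rightPart (x xm xp ymm ymp ypm ypp : ℝ) : Measure (ℝ × ℝ) :=
  ENNReal.ofReal (lamM x xm xp * lamMM xm ymm ymp) • Measure.dirac (xm, ymm) +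
  ENNReal.ofReal (lamM x xm xp * lamMP xm ymm ymp) • Measure.dirac (xm, ymp) +
  ENNReal.ofReal (lamP x xm xp * lamPM xp ypm ypp) • Measure.dirac (xp, ypm) +
  ENNReal.ofReal (lamP x xm xp * lamPP xp ypm ypp) • Measure.dirac (xp, ypp)

/-- The left part `π_l` of the BTP with the given nodes. -/
def leftPart (x xm xp ymm ymp ypm ypp : ℝ) : Measure (ℝ × ℝ) :=
  ENNReal.ofReal (lamM x xm xp * lamMM xm ymm ymp) • Measure.dirac (x, ymm) +
  ENNReal.ofReal (lamM x xm xp * lamMP xm ymm ymp) • Measure.dirac (x, ymp) +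
  ENNReal.ofReal (lamP x xm xp * lamPM xp ypm ypp) • Measure.dirac (x, ypm) +
  ENNReal.ofReal (lamP x xm xp * lamPP xp ypm ypp) • Measure.dirac (x, ypp)

/-- A measure on `ℝ²` has finite support. -/
def FinSupp (ρ : Measure (ℝ × ℝ)) : Prop :=
  ∃ S : Finset (ℝ × ℝ), ρ ((↑S : Set (ℝ × ℝ))ᶜ) = 0

/-- Equality of the two marginals of two measures on `ℝ²`. -/
def SameMarginals (ρ ρ' : Measure (ℝ × ℝ)) : Prop :=
  ρ'.map Prod.fst = ρ.map Prod.fst ∧ ρ'.map Prod.snd = ρ.map Prod.snd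

/-- The fiberwise barycenter (martingale) condition:
`∫_{{s}×ℝ} t dρ(s,t) = s · ρ({s}×ℝ)` for every `s`. -/
def FiberBarycenter (ρ : Measure (ℝ × ℝ)) : Prop :=
  ∀ s : ℝ, ∫ p in {p : ℝ × ℝ | p.1 = s}, p.2 ∂ρ =
    s * (ρ {p : ℝ × ℝ | p.1 = s}).toReal

/-- A finite discrete measure with given weights and atoms. -/
def discM {n : ℕ} (w : Fin n → ℝ) (P : Fin n → ℝ × ℝ) : Measure (ℝ × ℝ) :=
  ∑ i, ENNReal.ofReal (w i) • Measure.dirac (P i)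

lemma discM_integral {n : ℕ} (w : Fin n → ℝ) (P : Fin n → ℝ × ℝ) (hw : ∀ i, 0 ≤ w i)
    (f : ℝ × ℝ → ℝ) : ∫ p, f p ∂(discM w P) = ∑ i, w i * f (P i) := by
  unfold discM
  rw [integral_finsetSum_measure]
  · refine Finset.sum_congr rfl fun i _ => ?_
    rw [integral_smul_measure, integral_dirac, ENNReal.toReal_ofReal (hw i), smul_eq_mul]
  · intro i _
    exact (integrable_dirac (by simp)).smul_measure ENNReal.ofReal_ne_top

lemma discM_finite {n : ℕ} (w : Fin n → ℝ) (P : Fin n → ℝ × ℝ) :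
    IsFiniteMeasure (discM w P) := by
  constructor
  simp [discM, Measure.finsetSum_apply]

lemma discM_finSupp {n : ℕ} (w : Fin n → ℝ) (P : Fin n → ℝ × ℝ) :
    FinSupp (discM w P) := by
  classical
  refine ⟨Finset.univ.image P, ?_⟩
  simp [discM, Measure.finsetSum_apply]

lemma discM_fiber {n : ℕ} (w : Fin n → ℝ) (P : Fin n → ℝ × ℝ) (hw : ∀ i, 0 ≤ w i)
    (h : ∀ s : ℝ, ∑ i, w i * (if (P i).1 = s then (P i).2 - s else 0) = 0) :
    FiberBarycenter (discM w P) := by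
  intro s
  have hS : MeasurableSet {p : ℝ × ℝ | p.1 = s} := measurable_fst (measurableSet_singleton s)
  have e := integral_indicator_one (μ := discM w P) hS
  rw [Measure.real] at e
  rw [← integral_indicator hS, ← e, discM_integral w P hw, discM_integral w P hw,
    ← sub_eq_zero, ← h s, Finset.mul_sum, ← Finset.sum_sub_distrib]
  refine Finset.sum_congr rfl fun i _ => ?_
  by_cases hi : (P i).1 = s
  · simp [Set.indicator, hi]; ring
  · simp [Set.indicator, hi]

lemma up_aux (g : ℝ → ℝ) (hg : Monotone g) {ma mc a c p s : ℝ} (h0 : 0 ≤ ma) (h0' : 0 ≤ mc)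
    (h1 : ma + mc = 1) (hp : ma * a + mc * c = p) (hac : a ≤ c) (hps : p ≤ s) (hsc : s ≤ c)
    (hs : s = p ∨ (0 < ma ∧ 0 < mc)) :
    ∃ u v : ℝ, 0 ≤ u ∧ 0 ≤ v ∧ (ma = 0 → u = 0) ∧ (mc = 0 → v = 0) ∧ u + v = 1 ∧
      u * a + v * c = s ∧ ma * g a + mc * g c ≤ u * g a + v * g c := by
  rcases eq_or_lt_of_le hac with rfl | hlt
  · have : s = p := by
      have : p = a := by rw [← hp, ← add_mul, h1, one_mul]
      linarith
    exact ⟨ma, mc, h0, h0', id, id, h1, by linarith, le_rfl⟩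
  rcases hs with rfl | ⟨ha, hc⟩
  · exact ⟨ma, mc, h0, h0', id, id, h1, hp, le_rfl⟩
  have hd : 0 < c - a := by linarith
  have hap : a ≤ p := by
    have : ma = 1 - mc := by linarith
    rw [← hp, this]; nlinarith [mul_pos hc hd]
  refine ⟨(c - s) / (c - a), (s - a) / (c - a), div_nonneg (by linarith) hd.le,
    div_nonneg (by linarith) hd.le, fun h => absurd h ha.ne', fun h => absurd h hc.ne', ?_, ?_, ?_⟩
  · field_simp; ring
  · field_simp; ring
  · have e1 : (c - s) / (c - a) = 1 - (s - a) / (c - a) := by field_simp; ring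
    have e2 : mc ≤ (s - a) / (c - a) := by
      rw [le_div_iff₀ hd]
      have : ma = 1 - mc := by linarith
      subst this
      linarith
    have e3 : ma = 1 - mc := by linarith
    rw [e1, e3]
    nlinarith [mul_nonneg (sub_nonneg.2 e2) (sub_nonneg.2 (hg hac))]

lemma down_aux (g : ℝ → ℝ) (hg : Monotone g) {nb nd b d q s : ℝ} (h0 : 0 ≤ nb) (h0' : 0 ≤ nd)
    (h1 : nb + nd = 1) (hq : nb * b + nd * d = q) (hbd : b ≤ d) (hsq : s ≤ q) (hbs : b ≤ s)
    (hs : s = q ∨ (0 < nb ∧ 0 < nd)) :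
    ∃ u v : ℝ, 0 ≤ u ∧ 0 ≤ v ∧ (nb = 0 → u = 0) ∧ (nd = 0 → v = 0) ∧ u + v = 1 ∧
      u * b + v * d = s ∧ u * g b + v * g d ≤ nb * g b + nd * g d := by
  obtain ⟨u, v, hu, hv, hu0, hv0, huv, hm, hle⟩ :=
    up_aux (fun t => - g (-t)) (fun x y h => neg_le_neg (hg (neg_le_neg h)))
      (ma := nd) (mc := nb) (a := -d) (c := -b) (p := -q) (s := -s) h0' h0 (by linarith)
      (by linarith) (by linarith) (by linarith) (by linarith)
      (by rcases hs with h | h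
          · left; linarith
          · right; exact ⟨h.2, h.1⟩)
  refine ⟨v, u, hv, hu, hv0, hu0, by linarith, by linarith, ?_⟩
  simp only [neg_neg] at hle
  linarith

lemma core_aux (g : ℝ → ℝ) (hg : Monotone g) {ma mc a c p nb nd b d q : ℝ}
    (h0 : 0 ≤ ma) (h0' : 0 ≤ mc) (h1 : ma + mc = 1) (hp : ma * a + mc * c = p) (hap : a ≤ p)
    (hpc : p ≤ c)
    (k0 : 0 ≤ nb) (k0' : 0 ≤ nd) (k1 : nb + nd = 1) (hq : nb * b + nd * d = q) (hbq : b ≤ q)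
    (hqd : q ≤ d) (hpq : p ≤ q) :
    (∃ u v u' v' : ℝ, 0 ≤ u ∧ 0 ≤ v ∧ 0 ≤ u' ∧ 0 ≤ v' ∧ (ma = 0 → u = 0) ∧ (mc = 0 → v = 0) ∧
      (nb = 0 → u' = 0) ∧ (nd = 0 → v' = 0) ∧ u + v = 1 ∧ u' + v' = 1 ∧
      u * a + v * c = u' * b + v' * d ∧ u' * g b + v' * g d < u * g a + v * g c) ∨
    ma * g a + mc * g c ≤ nb * g b + nd * g d := by
  have hac := hap.trans hpc
  have hbd := hbq.trans hqd
  have main : ∀ s, p ≤ s → s ≤ c → s ≤ q → b ≤ s → (s = p ∨ (0 < ma ∧ 0 < mc)) →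
      (s = q ∨ (0 < nb ∧ 0 < nd)) →
      (∃ u v u' v' : ℝ, 0 ≤ u ∧ 0 ≤ v ∧ 0 ≤ u' ∧ 0 ≤ v' ∧ (ma = 0 → u = 0) ∧ (mc = 0 → v = 0) ∧
      (nb = 0 → u' = 0) ∧ (nd = 0 → v' = 0) ∧ u + v = 1 ∧ u' + v' = 1 ∧
      u * a + v * c = u' * b + v' * d ∧ u' * g b + v' * g d < u * g a + v * g c) ∨
      ma * g a + mc * g c ≤ nb * g b + nd * g d := by
    intro s hps hsc hsq hbs hs hs'
    obtain ⟨u, v, hu, hv, hu0, hv0, huv, hm, hle⟩ := up_aux g hg h0 h0' h1 hp hac hps hsc hs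
    obtain ⟨u', v', hu', hv', hu0', hv0', huv', hm', hle'⟩ :=
      down_aux g hg k0 k0' k1 hq hbd hsq hbs hs'
    by_cases hlt : u' * g b + v' * g d < u * g a + v * g c
    · exact Or.inl ⟨u, v, u', v', hu, hv, hu', hv', hu0, hv0, hu0', hv0', huv, huv',
        hm.trans hm'.symm, hlt⟩
    · exact Or.inr (by linarith)
  have ub : ma * g a + mc * g c ≤ g c := by
    have : mc = 1 - ma := by linarith
    rw [this]; nlinarith [mul_nonneg h0 (sub_nonneg.2 (hg hac))]
  have lb : g b ≤ nb * g b + nd * g d := by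
    have : nb = 1 - nd := by linarith
    rw [this]; nlinarith [mul_nonneg k0' (sub_nonneg.2 (hg hbd))]
  have dM : ¬ (0 < ma ∧ 0 < mc) → ma * g a + mc * g c = g p := by
    intro h
    rcases eq_or_lt_of_le h0 with e | e
    · rw [← e] at h1 hp ⊢
      have : mc = 1 := by linarith
      subst this
      have : c = p := by linarith
      subst this; ring
    · have e' : mc = 0 := le_antisymm (not_lt.1 fun h' => h ⟨e, h'⟩) h0'
      rw [e'] at h1 hp ⊢
      have : ma = 1 := by linarith
      subst this
      have : a = p := by linarith
      subst this; ring
  have dN : ¬ (0 < nb ∧ 0 < nd) → nb * g b + nd * g d = g q := by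
    intro h
    rcases eq_or_lt_of_le k0 with e | e
    · rw [← e] at k1 hq ⊢
      have : nd = 1 := by linarith
      subst this
      have : d = q := by linarith
      subst this; ring
    · have e' : nd = 0 := le_antisymm (not_lt.1 fun h' => h ⟨e, h'⟩) k0'
      rw [e'] at k1 hq ⊢
      have : nb = 1 := by linarith
      subst this
      have : b = q := by linarith
      subst this; ring
  by_cases hM : 0 < ma ∧ 0 < mc
  · by_cases hN : 0 < nb ∧ 0 < nd
    · rcases le_total b c with h | h
      · exact main (max b p) (le_max_right _ _) (max_le h hpc) (max_le hbq hpq) (le_max_left _ _)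
          (Or.inr hM) (Or.inr hN)
      · exact Or.inr (ub.trans ((hg h).trans lb))
    · rcases le_total q c with h | h
      · exact main q hpq h le_rfl hbq (Or.inr hM) (Or.inl rfl)
      · right; rw [dN hN]; exact ub.trans (hg h)
  · by_cases hN : 0 < nb ∧ 0 < nd
    · rcases le_total b p with h | h
      · exact main p le_rfl hpc hpq h (Or.inl rfl) (Or.inr hN)
      · right; rw [dM hM]; exact (hg h).trans lb
    · right; rw [dM hM, dN hN]; exact hg hpq

lemma eps_aux {m u : ℝ} (hm : 0 ≤ m) (hu : 0 ≤ u) (hu1 : u ≤ 1) (h : m = 0 → u = 0) :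
    ∃ e : ℝ, 0 < e ∧ ∀ r, 0 ≤ r → r ≤ e → r * u ≤ m := by
  rcases eq_or_lt_of_le hm with h' | h'
  · exact ⟨1, one_pos, fun r _ _ => by rw [h h'.symm]; simpa using hm⟩
  · exact ⟨m, h', fun r hr hre => by nlinarith⟩

lemma g_mono {p q : ℝ} (hpq : p ≤ q) : Monotone fun t : ℝ => |q + t| - |p + t| := by
  intro s t hst
  simp only
  rcases abs_cases (q + s) with h | h <;> rcases abs_cases (q + t) with h' | h' <;>
  rcases abs_cases (p + s) with k | k <;> rcases abs_cases (p + t) with k' | k' <;> linarith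

lemma ofReal_split {m r : ℝ} (h0 : 0 ≤ r) (h : r ≤ m) :
    ENNReal.ofReal m = ENNReal.ofReal (m - r) + ENNReal.ofReal r := by
  rw [← ENNReal.ofReal_add (by linarith) h0, sub_add_cancel]

lemma lam_aux {y a c : ℝ} (h1 : a ≤ y) (h2 : y ≤ c) :
    0 ≤ 1 - lamP y a c ∧ 0 ≤ lamP y a c ∧ (1 - lamP y a c) * a + lamP y a c * c = y := by
  unfold lamP
  split_ifs with h
  · have hd : 0 < c - a := by linarith
    refine ⟨?_, div_nonneg (by linarith) hd.le, ?_⟩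
    · rw [sub_nonneg, div_le_one hd]; linarith
    · field_simp; ring
  · refine ⟨by simp, by simp, ?_⟩
    linarith

lemma abstract_aux {x p q a c b d lm lp ma mc nb nd : ℝ}
    (hlm : 0 ≤ lm) (hlp : 0 ≤ lp) (hl : lm + lp = 1) (hx : lm * p + lp * q = x)
    (h0 : 0 ≤ ma) (h0' : 0 ≤ mc) (h1 : ma + mc = 1) (hp : ma * a + mc * c = p) (hap : a ≤ p)
    (hpc : p ≤ c)
    (k0 : 0 ≤ nb) (k0' : 0 ≤ nd) (k1 : nb + nd = 1) (hq : nb * b + nd * d = q) (hbq : b ≤ q)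
    (hqd : q ≤ d) (hpq : p ≤ q) (μ ν : Measure (ℝ × ℝ))
    (hμ : μ = ENNReal.ofReal (lm * ma) • Measure.dirac (p, a) +
      ENNReal.ofReal (lm * mc) • Measure.dirac (p, c) +
      ENNReal.ofReal (lp * nb) • Measure.dirac (q, b) +
      ENNReal.ofReal (lp * nd) • Measure.dirac (q, d))
    (hν : ν = ENNReal.ofReal (lm * ma) • Measure.dirac (x, a) +
      ENNReal.ofReal (lm * mc) • Measure.dirac (x, c) +
      ENNReal.ofReal (lp * nb) • Measure.dirac (x, b) +
      ENNReal.ofReal (lp * nd) • Measure.dirac (x, d)) :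
    (∃ ρ : Measure (ℝ × ℝ), FinSupp ρ ∧ IsFiniteMeasure ρ ∧
        SameMarginals μ ρ ∧ FiberBarycenter ρ ∧
        ∫ p : ℝ × ℝ, |p.1 + p.2| ∂μ < ∫ p : ℝ × ℝ, |p.1 + p.2| ∂ρ) ∨
    ∫ p : ℝ × ℝ, |p.1 + p.2| ∂ν ≤ ∫ p : ℝ × ℝ, |p.1 + p.2| ∂μ := by
  have w1 : 0 ≤ lm * ma := by positivity
  have w2 : 0 ≤ lm * mc := by positivity
  have w3 : 0 ≤ lp * nb := by positivity
  have w4 : 0 ≤ lp * nd := by positivity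
  have hw : ∀ i : Fin 4, 0 ≤ (![lm * ma, lm * mc, lp * nb, lp * nd] : Fin 4 → ℝ) i := by
    intro i; fin_cases i <;> simpa
  have Iμ : ∫ p : ℝ × ℝ, |p.1 + p.2| ∂μ = lm * ma * |p + a| + lm * mc * |p + c| +
      lp * nb * |q + b| + lp * nd * |q + d| := by
    have := discM_integral ![lm * ma, lm * mc, lp * nb, lp * nd]
      ![(p, a), (p, c), (q, b), (q, d)] hw (fun p => |p.1 + p.2|)
    simp only [discM, Fin.sum_univ_four] at this
    rw [hμ]; exact this
  have Iν : ∫ p : ℝ × ℝ, |p.1 + p.2| ∂ν = lm * ma * |x + a| + lm * mc * |x + c| +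
      lp * nb * |x + b| + lp * nd * |x + d| := by
    have := discM_integral ![lm * ma, lm * mc, lp * nb, lp * nd]
      ![(x, a), (x, c), (x, b), (x, d)] hw (fun p => |p.1 + p.2|)
    simp only [discM, Fin.sum_univ_four] at this
    rw [hν]; exact this
  have conv : ∀ t, |x + t| ≤ lm * |p + t| + lp * |q + t| := by
    intro t
    have : x + t = lm * (p + t) + lp * (q + t) := by
      rw [← hx]; linear_combination (-t) * hl
    rw [this]
    refine (abs_add_le _ _).trans ?_
    rw [abs_mul, abs_mul, abs_of_nonneg hlm, abs_of_nonneg hlp]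
  have fin : lm * lp * (ma * (|q + a| - |p + a|) + mc * (|q + c| - |p + c|)) ≤
      lm * lp * (nb * (|q + b| - |p + b|) + nd * (|q + d| - |p + d|)) →
      ∫ p : ℝ × ℝ, |p.1 + p.2| ∂ν ≤ ∫ p : ℝ × ℝ, |p.1 + p.2| ∂μ := by
    intro h
    rw [Iμ, Iν]
    have c1 := mul_le_mul_of_nonneg_left (conv a) w1
    have c2 := mul_le_mul_of_nonneg_left (conv c) w2
    have c3 := mul_le_mul_of_nonneg_left (conv b) w3
    have c4 := mul_le_mul_of_nonneg_left (conv d) w4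
    have e : lp = 1 - lm := by linarith
    subst e
    linarith
  rcases eq_or_lt_of_le hlm with e | hlm'
  · right; apply fin; rw [← e]; simp
  rcases eq_or_lt_of_le hlp with e | hlp'
  · right; apply fin; rw [← e]; simp
  rcases eq_or_lt_of_le hpq with e | hpq'
  · right; apply fin; rw [e]; simp
  rcases core_aux _ (g_mono hpq) h0 h0' h1 hp hap hpc k0 k0' k1 hq hbq hqd hpq with h | h
  swap
  · right; exact fin (mul_le_mul_of_nonneg_left h (by positivity))
  left
  obtain ⟨u, v, u', v', hu, hv, hu', hv', hu0, hv0, hu0', hv0', huv, huv', hm, hlt⟩ := h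
  obtain ⟨e1, e1p, he1⟩ := eps_aux w1 hu (by linarith)
    (fun h => hu0 ((mul_eq_zero.1 h).resolve_left hlm'.ne'))
  obtain ⟨e2, e2p, he2⟩ := eps_aux w2 hv (by linarith)
    (fun h => hv0 ((mul_eq_zero.1 h).resolve_left hlm'.ne'))
  obtain ⟨e3, e3p, he3⟩ := eps_aux w3 hu' (by linarith)
    (fun h => hu0' ((mul_eq_zero.1 h).resolve_left hlp'.ne'))
  obtain ⟨e4, e4p, he4⟩ := eps_aux w4 hv' (by linarith)
    (fun h => hv0' ((mul_eq_zero.1 h).resolve_left hlp'.ne'))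
  obtain ⟨r, hr, r1, r2, r3, r4⟩ : ∃ r : ℝ, 0 < r ∧ r ≤ e1 ∧ r ≤ e2 ∧ r ≤ e3 ∧ r ≤ e4 :=
    ⟨min (min e1 e2) (min e3 e4), by positivity, by simp, by simp, by simp, by simp⟩
  have z1 := he1 r hr.le r1
  have z2 := he2 r hr.le r2
  have z3 := he3 r hr.le r3
  have z4 := he4 r hr.le r4
  have y1 : 0 ≤ r * u := by positivity
  have y2 : 0 ≤ r * v := by positivity
  have y3 : 0 ≤ r * u' := by positivity
  have y4 : 0 ≤ r * v' := by positivity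
  set w : Fin 8 → ℝ := ![lm * ma - r * u, lm * mc - r * v, r * u', r * v',
    r * u, r * v, lp * nb - r * u', lp * nd - r * v'] with hwdef
  set P : Fin 8 → ℝ × ℝ := ![(p, a), (p, c), (p, b), (p, d), (q, a), (q, c), (q, b), (q, d)]
    with hPdef
  have hw8 : ∀ i, 0 ≤ w i := by
    intro i; fin_cases i <;> simp [hwdef] <;> assumption
  refine ⟨discM w P, discM_finSupp w P, discM_finite w P, ⟨?_, ?_⟩, ?_, ?_⟩
  · have E1 : ENNReal.ofReal (lm * ma) + ENNReal.ofReal (lm * mc) =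
        ENNReal.ofReal (lm * ma - r * u) + ENNReal.ofReal (lm * mc - r * v) +
        ENNReal.ofReal (r * u') + ENNReal.ofReal (r * v') := by
      rw [← ENNReal.ofReal_add, ← ENNReal.ofReal_add, ← ENNReal.ofReal_add, ← ENNReal.ofReal_add]
      · congr 1; linear_combination r * huv - r * huv'
      all_goals linarith
    have E2 : ENNReal.ofReal (lp * nb) + ENNReal.ofReal (lp * nd) =
        ENNReal.ofReal (r * u) + ENNReal.ofReal (r * v) +
        ENNReal.ofReal (lp * nb - r * u') + ENNReal.ofReal (lp * nd - r * v') := by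
      rw [← ENNReal.ofReal_add, ← ENNReal.ofReal_add, ← ENNReal.ofReal_add, ← ENNReal.ofReal_add]
      · congr 1; linear_combination r * huv' - r * huv
      all_goals linarith
    have L : μ.map Prod.fst =
        (ENNReal.ofReal (lm * ma) + ENNReal.ofReal (lm * mc)) • Measure.dirac p +
        (ENNReal.ofReal (lp * nb) + ENNReal.ofReal (lp * nd)) • Measure.dirac q := by
      rw [hμ]
      simp only [Measure.map_add _ _ measurable_fst, Measure.map_smul,
        Measure.map_dirac' measurable_fst, add_smul]
      abel
    rw [L, E1, E2]
    simp only [discM, Fin.sum_univ_eight, hwdef, hPdef, Measure.map_add _ _ measurable_fst,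
      Measure.map_smul, Measure.map_dirac' measurable_fst, add_smul, Matrix.cons_val]
    abel
  · rw [hμ, ofReal_split y1 z1, ofReal_split y2 z2, ofReal_split y3 z3, ofReal_split y4 z4]
    simp only [discM, Fin.sum_univ_eight, hwdef, hPdef, Measure.map_add _ _ measurable_snd,
      Measure.map_smul, Measure.map_dirac' measurable_snd, add_smul, Matrix.cons_val]
    abel
  · apply discM_fiber w P hw8
    intro s
    simp only [Fin.sum_univ_eight, hwdef, hPdef, Matrix.cons_val]
    by_cases hs : p = s
    · have hs' : ¬ q = s := by rw [← hs]; exact hpq'.ne'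
      simp only [hs, hs', if_true, if_false]
      subst hs
      linear_combination lm * hp - r * hm + r * p * huv - r * p * huv' - lm * p * h1
    · by_cases hs' : q = s
      · simp only [hs, hs', if_true, if_false]
        subst hs'
        linear_combination lp * hq + r * hm - r * q * huv + r * q * huv' - lp * q * k1
      · simp [hs, hs']
  · rw [discM_integral w P hw8, Iμ]
    simp only [Fin.sum_univ_eight, hwdef, hPdef, Matrix.cons_val]
    have := mul_lt_mul_of_pos_left hlt hr
    linarith

/-- Dominance of the right part of a BTP: either the right part is a suboptimal
martingale transport plan for the cost `|x + y|`, or its cost dominates the cost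
of the left part. -/
theorem btp_right_part_dominance
    (x xm xp ymm ymp ypm ypp : ℝ)
    (h1 : xm ≤ x) (h2 : x ≤ xp)
    (h3 : ymm ≤ xm) (h4 : xm ≤ ymp)
    (h5 : ypm ≤ xp) (h6 : xp ≤ ypp) :
    (∃ ρ : Measure (ℝ × ℝ), FinSupp ρ ∧ IsFiniteMeasure ρ ∧
        SameMarginals (rightPart x xm xp ymm ymp ypm ypp) ρ ∧ FiberBarycenter ρ ∧
        ∫ p : ℝ × ℝ, |p.1 + p.2| ∂(rightPart x xm xp ymm ymp ypm ypp) <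
          ∫ p : ℝ × ℝ, |p.1 + p.2| ∂ρ) ∨
    ∫ p : ℝ × ℝ, |p.1 + p.2| ∂(leftPart x xm xp ymm ymp ypm ypp) ≤
      ∫ p : ℝ × ℝ, |p.1 + p.2| ∂(rightPart x xm xp ymm ymp ypm ypp) := by
  obtain ⟨a1, a2, a3⟩ := lam_aux h1 h2
  obtain ⟨b1, b2, b3⟩ := lam_aux h3 h4
  obtain ⟨c1, c2, c3⟩ := lam_aux h5 h6
  exact abstract_aux (lm := lamM x xm xp) (lp := lamP x xm xp) (ma := lamMM xm ymm ymp)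
    (mc := lamMP xm ymm ymp) (nb := lamPM xp ypm ypp) (nd := lamPP xp ypm ypp)
    a1 a2 (sub_add_cancel _ _) a3 b1 b2 (sub_add_cancel _ _) b3 h3 h4
    c1 c2 (sub_add_cancel _ _) c3 h5 h6 (h1.trans h2) _ _ rfl rfl
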